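/- Let A be an atomic domain. Every nonzero nonunit of A that is a finite product of good atoms of A is an HF-element of A. -/

import Mathlib

/-!
Let `s` be a multiset of good atoms and `t` a multiset of atoms with associated products; we show
`card s = card t` by strong induction on `card s`. After absorbing a unit into one factor of `t`,
the two products are equal. If this atomic equality is irredundant, it must be balanced, since
otherwise every factor in `s` would be bad. If it is redundant, it splits, by cancellation, into
two relations of the same kind (up to a unit), each having a proper part of `s` on its left side,
and the induction hypothesis applies to both.
-/

/-- An *atomic equality* `a₁⋯aₙ = b₁⋯bₘ` (n, m ≥ 1), encoded by two nonempty
multisets of irreducible elements with equal products. -/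
def IsAtomicEquality {A : Type*} [CommRing A] (s t : Multiset A) : Prop :=
  s ≠ 0 ∧ t ≠ 0 ∧ (∀ a ∈ s, Irreducible a) ∧ (∀ b ∈ t, Irreducible b) ∧ s.prod = t.prod

/-- The atomic equality given by `s` and `t` is *irredundant* if no product of a
nonempty proper sub-multiset of `s` is associated to a product of a nonempty proper
sub-multiset of `t`. -/
def IsIrredundant {A : Type*} [CommRing A] (s t : Multiset A) : Prop :=
  ∀ u v : Multiset A, u ≤ s → v ≤ t → u ≠ 0 → v ≠ 0 → u ≠ s → v ≠ t →
    ¬ Associated u.prod v.prod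

/-- A *bad atom* is an irreducible element appearing in some irredundant unbalanced
atomic equality. -/
def IsBadAtom {A : Type*} [CommRing A] (x : A) : Prop :=
  Irreducible x ∧ ∃ s t : Multiset A, IsAtomicEquality s t ∧ IsIrredundant s t ∧
    Multiset.card s ≠ Multiset.card t ∧ (x ∈ s ∨ x ∈ t)

/-- A *good atom* is an irreducible element that is not a bad atom. -/
def IsGoodAtom {A : Type*} [CommRing A] (x : A) : Prop :=
  Irreducible x ∧ ¬ IsBadAtom x

/-- A ring is *atomic* if every nonzero nonunit is a finite product of irreducible
elements. -/
def IsAtomicDomain (A : Type*) [CommRing A] : Prop :=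
  ∀ x : A, x ≠ 0 → ¬ IsUnit x → ∃ s : Multiset A, (∀ a ∈ s, Irreducible a) ∧ s.prod = x

/-- An *HF-element*: all its factorizations into irreducible elements have the same
number of factors. -/
def IsHFElement {A : Type*} [CommRing A] (x : A) : Prop :=
  ∀ s t : Multiset A, (∀ a ∈ s, Irreducible a) → (∀ b ∈ t, Irreducible b) →
    s.prod = x → t.prod = x → Multiset.card s = Multiset.card t

/-- A *half-factorial domain*: an atomic domain in which every nonzero nonunit is an
HF-element. -/
def IsHFD (A : Type*) [CommRing A] : Prop :=
  IsAtomicDomain A ∧ ∀ x : A, x ≠ 0 → ¬ IsUnit x → IsHFElement x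

lemma prod_ne_zero_of_irreducible {A : Type*} [CommRing A] [IsDomain A] {s : Multiset A}
    (hs : ∀ a ∈ s, Irreducible a) : s.prod ≠ 0 :=
  Multiset.prod_ne_zero fun h => (hs 0 h).ne_zero rfl

lemma eq_zero_of_isUnit_prod {A : Type*} [CommRing A] {s : Multiset A}
    (hs : ∀ a ∈ s, Irreducible a) (hu : IsUnit s.prod) : s = 0 := by
  by_contra h
  obtain ⟨a, ha⟩ := Multiset.exists_mem_of_ne_zero h
  exact (hs a ha).not_isUnit (isUnit_of_dvd_unit (Multiset.dvd_prod ha) hu)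

/-- A unit can be absorbed into one factor of a nonempty product of atoms. -/
lemma exists_factorization_of_associated {A : Type*} [CommRing A] {t : Multiset A} {y : A}
    (ht0 : t ≠ 0) (ht : ∀ b ∈ t, Irreducible b) (h : Associated t.prod y) :
    ∃ t' : Multiset A, Multiset.card t' = Multiset.card t ∧ (∀ b ∈ t', Irreducible b) ∧
      t'.prod = y := by
  obtain ⟨w, rfl⟩ := h
  obtain ⟨b, hb⟩ := Multiset.exists_mem_of_ne_zero ht0
  obtain ⟨r, rfl⟩ := Multiset.exists_cons_of_mem hb
  refine ⟨(b * w) ::ₘ r, by simp, fun c hc => ?_, by simp only [Multiset.prod_cons]; ring⟩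
  rcases Multiset.mem_cons.1 hc with rfl | hc
  · exact (irreducible_mul_units w).2 (ht b (Multiset.mem_cons_self _ _))
  · exact ht c (Multiset.mem_cons_of_mem hc)

/-- A product of good atoms has the same number of factors as any product of atoms associated
to it. Associated rather than equal products are needed for the induction, because a redundancy
is only an equality up to a unit. -/
lemma card_eq_of_good {A : Type*} [CommRing A] [IsDomain A] (n : ℕ) :
    ∀ s t : Multiset A, Multiset.card s = n → (∀ a ∈ s, IsGoodAtom a) →
      (∀ b ∈ t, Irreducible b) → Associated s.prod t.prod →
      Multiset.card s = Multiset.card t := by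
  induction n using Nat.strong_induction_on with
  | _ n ih =>
    intro s t₀ hn hs ht₀ hst₀
    have hs' : ∀ a ∈ s, Irreducible a := fun a ha => (hs a ha).1
    rcases eq_or_ne t₀ 0 with rfl | ht0
    · rw [eq_zero_of_isUnit_prod hs' (hst₀.isUnit_iff.2 (by simp))]
    have hs0 : s ≠ 0 := by
      rintro rfl
      exact ht0 (eq_zero_of_isUnit_prod ht₀ (hst₀.isUnit_iff.1 (by simp)))
    obtain ⟨t, hcard, ht, hst⟩ := exists_factorization_of_associated ht0 ht₀ hst₀.symm
    have ht0' : t ≠ 0 := by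
      rw [← Multiset.card_pos, hcard]
      exact Multiset.card_pos.2 ht0
    rw [← hcard]
    by_cases hirr : IsIrredundant s t
    · by_contra hne
      obtain ⟨a, ha⟩ := Multiset.exists_mem_of_ne_zero hs0
      exact (hs a ha).2
        ⟨hs' a ha, s, t, ⟨hs0, ht0', hs', ht, hst.symm⟩, hirr, hne, Or.inl ha⟩
    · unfold IsIrredundant at hirr
      push Not at hirr
      obtain ⟨u, v, hus, hvt, hu0, -, hus', -, huv⟩ := hirr
      obtain ⟨u', rfl⟩ := Multiset.le_iff_exists_add.1 hus
      obtain ⟨v', rfl⟩ := Multiset.le_iff_exists_add.1 hvt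
      have hu'0 : u' ≠ 0 := by
        rintro rfl
        exact hus' (by simp)
      have hpos := Multiset.card_pos.2 hu0
      have hpos' := Multiset.card_pos.2 hu'0
      simp only [Multiset.mem_add] at hs hs' ht
      have huv' : Associated u'.prod v'.prod := by
        refine Associated.of_mul_left (a := u.prod) (c := v.prod) ?_ huv
          (prod_ne_zero_of_irreducible fun a ha => hs' a (Or.inl ha))
        rw [← Multiset.prod_add, ← Multiset.prod_add, hst]
        exact Associated.refl _
      rw [Multiset.card_add] at hn
      have h₁ := ih (Multiset.card u) (by omega) u v rfl (fun a ha => hs a (Or.inl ha))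
        (fun b hb => ht b (Or.inl hb)) huv
      have h₂ := ih (Multiset.card u') (by omega) u' v' rfl (fun a ha => hs a (Or.inr ha))
        (fun b hb => ht b (Or.inr hb)) huv'
      rw [Multiset.card_add, Multiset.card_add, h₁, h₂]

/-- Every nonzero nonunit of an atomic domain that is a finite product of good atoms
is an HF-element. -/
theorem stmt_4 {A : Type*} [CommRing A] [IsDomain A] (hA : IsAtomicDomain A)
    (x : A) (hx0 : x ≠ 0) (hxu : ¬ IsUnit x)
    (h : ∃ s : Multiset A, (∀ a ∈ s, IsGoodAtom a) ∧ s.prod = x) :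
    IsHFElement x := by
  obtain ⟨g, hg, hgx⟩ := h
  intro s t hs ht hsx htx
  rw [← card_eq_of_good _ g s rfl hg hs (by rw [hgx, hsx]),
    card_eq_of_good _ g t rfl hg ht (by rw [hgx, htx])]
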